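/- Let n ≥ 2, let Λ : ℕ → [0,1] be nonincreasing with Λ(0) = 1 and satisfying hypothesis H_Λ, and let μ be a probability measure on [0,1] satisfying hypothesis H_μ. For every constant gain ε ∈ (0,1), the Markov transition kernel P_ε of the one-dimensional SOM algorithm admits an invariant probability measure ν^ε with ν^ε(F_n^+) = 1. -/

import Mathlib

open MeasureTheory Set Filter Topology
open scoped Classical ENNReal

noncomputable section

/-- The winning unit: the smallest index `i` minimizing `|x - m i|`. -/
def winner {n : ℕ} [NeZero n] (m : Fin n → ℝ) (x : ℝ) : Fin n :=
  (Finset.univ.filter fun i : Fin n => ∀ j, |x - m i| ≤ |x - m j|).min'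
    (by
      obtain ⟨i, -, hi⟩ := Finset.exists_min_image (Finset.univ : Finset (Fin n))
        (fun i => |x - m i|) ⟨0, Finset.mem_univ _⟩
      exact ⟨i, Finset.mem_filter.mpr ⟨Finset.mem_univ _,
        fun j => hi j (Finset.mem_univ _)⟩⟩)

/-- One step of the one-dimensional SOM algorithm. -/
def somUpdate {n : ℕ} [NeZero n] (Λ : ℕ → ℝ) (ε : ℝ) (m : Fin n → ℝ) (x : ℝ) :
    Fin n → ℝ :=
  fun i => m i - ε * Λ (Nat.dist i.1 (winner m x).1) * (m i - x)

/-- `F_n^+` : increasingly ordered states with values in `(0,1)`. -/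
def Fplus (n : ℕ) : Set (Fin n → ℝ) :=
  {m | StrictMono m ∧ ∀ i, m i ∈ Set.Ioo (0 : ℝ) 1}

/-- `ν` is an invariant measure for the SOM Markov transition kernel
`P_ε(m, ·) = image of μ under x ↦ T_ε(m,x)`. -/
def IsSOMInvariant {n : ℕ} [NeZero n] (μ : Measure ℝ) (Λ : ℕ → ℝ) (ε : ℝ)
    (ν : Measure (Fin n → ℝ)) : Prop :=
  ν.bind (fun m => μ.map fun x => somUpdate Λ ε m x) = ν

/-- Hypothesis `H_Λ`. -/
def HLambda (n : ℕ) (Λ : ℕ → ℝ) : Prop :=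
  ∃ k₀ : ℕ, 2 * k₀ + 1 < n ∧ Λ (k₀ + 1) < Λ k₀

/-- Hypothesis `H_μ` on the density `f`. -/
def Hmu (f : ℝ → ℝ) : Prop :=
  (∀ x ∈ Set.Ioo (0 : ℝ) 1, 0 < f x) ∧
  (StrictConcaveOn ℝ (Set.Ioo (0 : ℝ) 1) (fun x => Real.log (f x)) ∨
    (ConcaveOn ℝ (Set.Ioo (0 : ℝ) 1) (fun x => Real.log (f x)) ∧
      ∃ a b : ℝ, Tendsto f (nhdsWithin 0 (Set.Ioi 0)) (nhds a) ∧
        Tendsto f (nhdsWithin 1 (Set.Iio 1)) (nhds b) ∧ 0 < a + b))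


open ProbabilityTheory BoundedContinuousFunction in
theorem krylov_bogoliubov {X : Type*} [TopologicalSpace X] [T2Space X] [HasOuterApproxClosed X]
    [MeasurableSpace X] [BorelSpace X] (κ : Kernel X X) [IsMarkovKernel κ]
    (hF : ∀ g : X →ᵇ ℝ, Continuous fun m => ∫ y, g y ∂κ m)
    (ν : ℕ → Measure X) (hp : ∀ k, IsProbabilityMeasure (ν k))
    (hν : ∀ k, ν (k+1) = (ν k).bind κ)
    (ht : ∀ δ : ℝ≥0∞, 0 < δ → ∃ K : Set X, IsCompact K ∧ ∀ k, ν k Kᶜ ≤ δ) :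
    ∃ π : Measure X, IsProbabilityMeasure π ∧ π.bind κ = π := by
  -- averages
  let A : ℕ → Measure X := fun N => ((N+1 : ℕ) : ℝ≥0∞)⁻¹ • ∑ k ∈ Finset.range (N+1), ν k
  have hAapp : ∀ N s, A N s = ((N+1 : ℕ) : ℝ≥0∞)⁻¹ * ∑ k ∈ Finset.range (N+1), ν k s := by
    intro N s; simp [A]
  have hcancel : ∀ N : ℕ, ((N+1 : ℕ) : ℝ≥0∞)⁻¹ * ((N+1 : ℕ) : ℝ≥0∞) = 1 := fun N =>
    ENNReal.inv_mul_cancel (by simp) (by simp)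
  have hAp : ∀ N, IsProbabilityMeasure (A N) := by
    intro N
    constructor
    rw [hAapp]
    simp only [measure_univ, Finset.sum_const, Finset.card_range, nsmul_eq_mul, mul_one]
    exact hcancel N
  let AP : ℕ → ProbabilityMeasure X := fun N => ⟨A N, hAp N⟩
  have htight : IsTightMeasureSet {((μ : ProbabilityMeasure X) : Measure X) | μ ∈ range AP} := by
    rw [isTightMeasureSet_iff_exists_isCompact_measure_compl_le]
    intro δ hδ
    obtain ⟨K, hK, h⟩ := ht δ hδ
    refine ⟨K, hK, ?_⟩
    rintro _ ⟨_, ⟨N, rfl⟩, rfl⟩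
    change A N Kᶜ ≤ δ
    rw [hAapp]
    calc _ ≤ ((N+1 : ℕ) : ℝ≥0∞)⁻¹ * ∑ k ∈ Finset.range (N+1), δ := by
          gcongr with k hk; exact h k
      _ = (((N+1 : ℕ) : ℝ≥0∞)⁻¹ * ((N+1 : ℕ) : ℝ≥0∞)) * δ := by
          simp only [Finset.sum_const, Finset.card_range, nsmul_eq_mul, mul_assoc]
      _ = δ := by rw [hcancel, one_mul]
  have hc := isCompact_closure_of_isTightMeasureSet htight
  obtain ⟨π, -, hπ⟩ := hc.ultrafilter_le_nhds ((hyperfilter ℕ).map AP) (by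
    rw [le_principal_iff]
    exact Filter.mem_of_superset (Filter.range_mem_map) subset_closure)
  have hlim : Tendsto AP (hyperfilter ℕ) (𝓝 π) := hπ
  rw [ProbabilityMeasure.tendsto_iff_forall_integral_tendsto] at hlim
  refine ⟨π, inferInstance, ?_⟩
  apply ext_of_forall_integral_eq_of_IsFiniteMeasure
  intro g
  have hbd : ∀ m, ‖∫ y, g y ∂κ m‖ ≤ ‖g‖ := fun m => by
    have := norm_integral_le_of_norm_le_const (μ := κ m) (f := g) (C := ‖g‖)
      (Eventually.of_forall fun x => g.norm_coe_le_norm x)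
    simpa using this
  let Pg : X →ᵇ ℝ := BoundedContinuousFunction.ofNormedAddCommGroup _ (hF g) ‖g‖ hbd
  have hbind : ∀ (ρ : Measure X) [IsProbabilityMeasure ρ],
      ∫ x, g x ∂(ρ.bind κ) = ∫ x, Pg x ∂ρ := by
    intro ρ _
    have h := Kernel.integral_comp (κ := Kernel.const Unit ρ) (η := κ) (a := ()) (f := g)
      (g.integrable _)
    rw [Kernel.comp_apply, Kernel.const_apply] at h
    exact h
  rw [hbind]
  have h1 := hlim Pg
  have h2 := hlim g
  have hAint : ∀ (N : ℕ) (u : X →ᵇ ℝ), ∫ x, u x ∂(AP N : Measure X) =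
      ((N:ℝ)+1)⁻¹ * ∑ k ∈ Finset.range (N+1), ∫ x, u x ∂ν k := by
    intro N u
    change ∫ x, u x ∂(A N) = _
    simp only [A]
    rw [integral_smul_measure, integral_finsetSum_measure (fun i _ => u.integrable _),
      ENNReal.toReal_inv, ENNReal.toReal_natCast, smul_eq_mul]
    push_cast
    rfl
  have hdiff : ∀ N : ℕ, ∫ x, Pg x ∂(AP N : Measure X) - ∫ x, g x ∂(AP N : Measure X) =
      ((N:ℝ)+1)⁻¹ * (∫ x, g x ∂ν (N+1) - ∫ x, g x ∂ν 0) := by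
    intro N
    rw [hAint, hAint, ← mul_sub, ← Finset.sum_sub_distrib]
    congr 1
    rw [← Finset.sum_range_sub (fun k => ∫ x, g x ∂ν k)]
    refine Finset.sum_congr rfl fun k _ => ?_
    rw [hν k, hbind]
  have h3 : Tendsto (fun N : ℕ => ∫ x, Pg x ∂(AP N : Measure X) - ∫ x, g x ∂(AP N : Measure X))
      atTop (𝓝 0) := by
    simp_rw [hdiff]
    apply squeeze_zero_norm (a := fun N : ℕ => ((N:ℝ)+1)⁻¹ * (‖g‖ + ‖g‖))
    · intro N
      rw [norm_mul, Real.norm_of_nonneg (by positivity : (0:ℝ) ≤ ((N:ℝ)+1)⁻¹)]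
      gcongr
      refine (norm_sub_le _ _).trans (add_le_add ?_ ?_)
      all_goals exact g.norm_integral_le_norm _
    · have : Tendsto (fun N : ℕ => ((N:ℝ)+1)⁻¹) atTop (𝓝 0) := by
        simpa using tendsto_one_div_add_atTop_nhds_zero_nat (𝕜 := ℝ)
      simpa using this.mul_const (‖g‖ + ‖g‖)
  have h4 := tendsto_nhds_unique (h1.sub h2) (h3.mono_left (Nat.hyperfilter_le_atTop))
  linarith

open ProbabilityTheory in
def kpow {X : Type*} [MeasurableSpace X] (κ : Kernel X X) : ℕ → Kernel X X
  | 0 => Kernel.id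
  | (j+1) => κ ∘ₖ kpow κ j

open ProbabilityTheory in
instance kpow_markov {X : Type*} [MeasurableSpace X] (κ : Kernel X X) [IsMarkovKernel κ] (j : ℕ) :
    IsMarkovKernel (kpow κ j) := by
  induction j with
  | zero => unfold kpow; infer_instance
  | succ j ih => unfold kpow; infer_instance

open ProbabilityTheory in
theorem kpow_add {X : Type*} [MeasurableSpace X] (κ : Kernel X X) (x : X) (k j : ℕ) :
    kpow κ (k + j) x = (kpow κ k x).bind (kpow κ j) := by
  induction j with
  | zero =>
    simp [kpow]
  | succ j ih =>
    rw [← add_assoc, kpow, Kernel.comp_apply, ih, kpow, Measure.comp_assoc]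

open ProbabilityTheory in
theorem tight_of_return {X : Type*} [MeasurableSpace X] (κ : Kernel X X) [IsMarkovKernel κ]
    (D : X → ℝ) (hD : Measurable D) (hDpos : ∀ m, 0 < D m) (r : ℝ) (hr : 0 < r) (hr1 : r ≤ 1)
    (hdec : ∀ m, ∀ᵐ y ∂(κ m), r * D m ≤ D y) (T : ℕ) (W : ℕ → Set X)
    (hWm : ∀ j, MeasurableSet (W j)) (hW0 : W 0 = univ) (p : ℝ≥0∞) (hp : 0 < p)
    (hstep : ∀ j < T, ∀ m ∈ W j, p ≤ κ m (W (j+1))) (δ : ℝ) (hδ : 0 < δ)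
    (hWT : ∀ m ∈ W T, δ ≤ D m) (x₀ : X) (e : ℝ≥0∞) (he : 0 < e) :
    ∃ η > 0, ∀ k, kpow κ k x₀ {m | D m < η} ≤ e := by
  have hmeas : ∀ η, MeasurableSet {m | D m < η} := fun η => measurableSet_lt hD measurable_const
  have h1 : ∀ m, ∀ j ≤ T, p ^ j ≤ kpow κ j m (W j) := by
    intro m j
    induction j with
    | zero => intro _; simp [hW0]
    | succ j ih =>
      intro hj
      have ih := ih (by omega)
      rw [kpow, Kernel.comp_apply' _ _ _ (hWm _)]
      calc p ^ (j+1) = p * p ^ j := pow_succ' _ _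
        _ ≤ p * kpow κ j m (W j) := by gcongr
        _ = ∫⁻ b in W j, p ∂(kpow κ j m) := by simp
        _ ≤ ∫⁻ b in W j, κ b (W (j+1)) ∂(kpow κ j m) :=
            setLIntegral_mono' (hWm j) (fun b hb => hstep j (by omega) b hb)
        _ ≤ _ := setLIntegral_le_lintegral _ _
  have h2 : ∀ m j, kpow κ j m {y | D y < r ^ j * D m} = 0 := by
    intro m j
    induction j with
    | zero =>
      simp only [kpow, Kernel.id_apply]
      rw [Measure.dirac_apply' _ (hmeas _)]
      simp
    | succ j ih =>
      rw [kpow, Kernel.comp_apply' _ _ _ (hmeas _)]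
      have : ∀ᵐ b ∂(kpow κ j m), κ b {y | D y < r ^ (j+1) * D m} = 0 := by
        have ih' : ∀ᵐ b ∂(kpow κ j m), ¬ (D b < r ^ j * D m) := by
          rw [ae_iff]; simpa using ih
        filter_upwards [ih'] with b hb
        have hb' := hdec b
        have : ∀ᵐ y ∂(κ b), ¬ (D y < r ^ (j+1) * D m) := by
          filter_upwards [hb'] with y hy
          have : r * (r ^ j * D m) ≤ r * D b := by
            apply mul_le_mul_of_nonneg_left _ hr.le
            linarith
          rw [pow_succ']
          nlinarith
        rw [ae_iff] at this
        simpa using this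
      rw [lintegral_congr_ae this]
      simp
  set q : ℝ≥0∞ := 1 - p ^ T with hq
  have hq1 : q < 1 := by
    apply ENNReal.sub_lt_self ENNReal.one_ne_top one_ne_zero
    exact pow_ne_zero T hp.ne'
  have h4 : ∀ k η, η ≤ δ → kpow κ (k + T) x₀ {m | D m < r ^ T * η} ≤
      q * kpow κ k x₀ {m | D m < η} := by
    intro k η hη
    rw [kpow_add, Measure.bind_apply (hmeas _) (Kernel.aemeasurable _)]
    have : ∀ m, kpow κ T m {m | D m < r ^ T * η} ≤
        ({m | D m < η} : Set X).indicator (fun _ => q) m := by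
      intro m
      by_cases hm : D m < η
      · rw [indicator_of_mem (by exact hm)]
        have hsub : {m | D m < r ^ T * η} ⊆ (W T)ᶜ := by
          intro y hy hyW
          have h1 := hWT y hyW
          have h2 : r ^ T * η ≤ η := by
            have := pow_le_one₀ hr.le hr1 (n := T)
            have := hDpos m
            nlinarith
          simp only [mem_ofPred_eq] at hy
          linarith
        refine (measure_mono hsub).trans ?_
        rw [prob_compl_eq_one_sub (hWm T)]
        exact tsub_le_tsub_left (h1 m T le_rfl) _
      · rw [indicator_of_notMem (by exact hm)]
        rw [nonpos_iff_eq_zero]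
        refine measure_mono_null ?_ (h2 m T)
        intro y hy
        have := pow_pos hr T
        simp only [mem_ofPred_eq] at hy ⊢
        nlinarith
    refine (lintegral_mono this).trans ?_
    rw [lintegral_indicator (hmeas _)]
    simp
  have h5 : ∀ j k, kpow κ (k + j * T) x₀ {m | D m < r ^ (T * j) * δ} ≤ q ^ j := by
    intro j
    induction j with
    | zero => intro k; simpa using prob_le_one
    | succ j ih =>
      intro k
      have h := h4 (k + j * T) (r ^ (T * j) * δ) (by
        have := pow_le_one₀ hr.le hr1 (n := T * j)
        nlinarith)
      rw [show k + (j+1) * T = k + j * T + T by ring,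
        show r ^ (T * (j+1)) * δ = r ^ T * (r ^ (T * j) * δ) by ring, pow_succ']
      exact h.trans (by gcongr; exact ih k)
  obtain ⟨j, hj⟩ := ((ENNReal.tendsto_pow_atTop_nhds_zero_of_lt_one hq1).eventually
    (ge_mem_nhds he)).exists
  refine ⟨r ^ (T * j) * min δ (D x₀), by have := hDpos x₀; positivity, fun k => ?_⟩
  have hrp := pow_pos hr (T * j)
  by_cases hk : j * T ≤ k
  · obtain ⟨l, rfl⟩ := Nat.exists_eq_add_of_le' hk
    refine (measure_mono ?_).trans ((h5 j l).trans hj)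
    intro y hy
    simp only [mem_ofPred_eq] at hy ⊢
    have := min_le_left δ (D x₀)
    nlinarith
  · refine (measure_mono_null ?_ (h2 x₀ k)).le.trans zero_le
    intro y hy
    simp only [mem_ofPred_eq] at hy ⊢
    have h1 := min_le_right δ (D x₀)
    have h2 : r ^ (T * j) ≤ r ^ k := pow_le_pow_of_le_one hr.le hr1 (by rw [mul_comm]; omega)
    have := hDpos x₀
    nlinarith

theorem comb_open (n k₀ : ℕ) (hk : 2 * k₀ + 1 < n) (O : ℕ → Prop) (hO : ∃ i ≤ n, O i)
    (hC : ∃ i, 1 ≤ i ∧ i < n ∧ ¬ O i) :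
    ∃ w i, 1 ≤ w ∧ w ≤ n ∧ (O w ∨ O (w-1)) ∧ 1 ≤ i ∧ i < n ∧ ¬ O i ∧
      (i = w + k₀ ∨ i + 1 + k₀ = w) := by
  by_contra H
  have H' : ∀ w i, 1 ≤ w → w ≤ n → 1 ≤ i → i < n → ¬ O i → (i = w + k₀ ∨ i + 1 + k₀ = w) →
      ¬ O w ∧ ¬ O (w-1) := by
    intro w i h1 h2 h3 h4 h5 h6
    constructor <;> intro h
    · exact H ⟨w, i, h1, h2, Or.inl h, h3, h4, h5, h6⟩
    · exact H ⟨w, i, h1, h2, Or.inr h, h3, h4, h5, h6⟩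
  have up : ∀ i, k₀ + 1 ≤ i → i < n → ¬ O i → ¬ O (i+1) := by
    intro i h1 h2 h3
    have a := (H' (i - k₀) i (by omega) (by omega) (by omega) h2 h3 (by omega)).1
    exact (H' (i+1) (i-k₀) (by omega) (by omega) (by omega) (by omega) a (by omega)).1
  have down : ∀ i, 1 ≤ i → i + k₀ + 1 ≤ n → ¬ O i → ¬ O (i-1) := by
    intro i h1 h2 h3
    have a := (H' (i + 1 + k₀) i (by omega) (by omega) (by omega) (by omega) h3 (by omega)).2
    rw [show i + 1 + k₀ - 1 = i + k₀ by omega] at a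
    exact (H' i (i + k₀) (by omega) (by omega) (by omega) (by omega) a (by omega)).2
  have upall : ∀ d i, k₀ + 1 ≤ i → i + d ≤ n → ¬ O i → ¬ O (i+d) := by
    intro d
    induction d with
    | zero => intro i _ _ h; exact h
    | succ d ih =>
      intro i h1 h2 h3
      exact up (i+d) (by omega) (by omega) (ih i h1 (by omega) h3)
  have downall : ∀ d i, d ≤ i → i + k₀ + 1 ≤ n → ¬ O i → ¬ O (i-d) := by
    intro d
    induction d with
    | zero => intro i _ _ h; exact h
    | succ d ih =>
      intro i h1 h2 h3
      have := down (i-d) (by omega) (by omega) (ih i (by omega) h2 h3)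
      rwa [show i - d - 1 = i - (d+1) by omega] at this
  obtain ⟨i, hi1, hi2, hi3⟩ := hC
  -- a closed gap in the middle zone
  have mid : ∃ i, k₀ + 1 ≤ i ∧ i + k₀ + 1 ≤ n ∧ ¬ O i := by
    by_cases h : k₀ + 1 ≤ i
    · have a := upall (n - 1 - i) i h (by omega) hi3
      rw [show i + (n-1-i) = n - 1 by omega] at a
      have b := (H' (n-1-k₀) (n-1) (by omega) (by omega) (by omega) (by omega) a (by omega)).1
      exact ⟨n-1-k₀, by omega, by omega, b⟩
    · have a := downall (i-1) i (by omega) (by omega) hi3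
      rw [show i - (i-1) = 1 by omega] at a
      have b := (H' (1+1+k₀) 1 (by omega) (by omega) (by omega) (by omega) a (by omega)).2
      exact ⟨1+1+k₀-1, by omega, by omega, b⟩
  obtain ⟨c, hc1, hc2, hc3⟩ := mid
  obtain ⟨o, ho, hoO⟩ := hO
  by_cases h : c ≤ o
  · have a := upall (o - c) c hc1 (by omega) hc3
    rw [show c + (o-c) = o by omega] at a
    exact a hoO
  · have a := downall (c - o) c (by omega) hc2 hc3
    rw [show c - (c-o) = o by omega] at a
    exact a hoO

/-- update relation for extended sequences -/
def Upd (Λ : ℕ → ℝ) (ε : ℝ) (n : ℕ) (e e' : ℕ → ℝ) (w : ℕ) (x : ℝ) : Prop :=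
  e' 0 = 0 ∧ e' (n+1) = 1 ∧ ∀ k, 1 ≤ k → k ≤ n → e' k = e k - ε * Λ (Nat.dist k w) * (e k - x)

/-- extended states -/
def Good (n : ℕ) (e : ℕ → ℝ) : Prop :=
  e 0 = 0 ∧ e (n+1) = 1 ∧ ∀ i ≤ n, e i < e (i+1)

theorem Good.mono {n : ℕ} {e : ℕ → ℝ} (h : Good n e) {i j : ℕ} (hij : i ≤ j) (hj : j ≤ n + 1) :
    e i ≤ e j := by
  obtain ⟨d, rfl⟩ := Nat.exists_eq_add_of_le hij
  clear hij
  induction d with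
  | zero => exact le_rfl
  | succ d ih =>
    have := h.2.2 (i+d) (by omega)
    have := ih (by omega)
    rw [← add_assoc]
    linarith

theorem Good.lt {n : ℕ} {e : ℕ → ℝ} (h : Good n e) {i j : ℕ} (hij : i < j) (hj : j ≤ n + 1) :
    e i < e j :=
  (h.2.2 i (by omega)).trans_le (h.mono (Nat.succ_le_of_lt hij) hj)

theorem mid_le {a b x : ℝ} (hab : a < b) (h : |x - b| ≤ |x - a|) : (a + b) / 2 ≤ x := by
  rw [← sq_le_sq] at h
  nlinarith

theorem le_mid {a b x : ℝ} (hab : a < b) (h : |x - a| ≤ |x - b|) : x ≤ (a + b) / 2 := by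
  rw [← sq_le_sq] at h
  nlinarith

theorem gap_dec {Λ : ℕ → ℝ} (hΛanti : Antitone Λ) (hΛr : ∀ k, Λ k ∈ Set.Icc (0 : ℝ) 1) {ε : ℝ}
    (hε : ε ∈ Ioo (0:ℝ) 1) {n : ℕ} {e e' : ℕ → ℝ} {w : ℕ} {x : ℝ} (hx : x ∈ Icc (0:ℝ) 1)
    (hn : 1 ≤ n)
    (he : Good n e) (hw1 : 1 ≤ w) (hwn : w ≤ n)
    (hwin : ∀ j, 1 ≤ j → j ≤ n → |x - e w| ≤ |x - e j|)
    (hU : Upd Λ ε n e e' w x) (i : ℕ) (hi : i ≤ n) :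
    (1 - ε) * (e (i+1) - e i) ≤ e' (i+1) - e' i := by
  obtain ⟨h0, h1, hU⟩ := hU
  obtain ⟨hε0, hε1⟩ := hε
  have key : ∀ a b g y : ℝ, a ∈ Icc (0:ℝ) 1 → b ∈ Icc (0:ℝ) 1 → b ≤ a → 0 < g → -g/2 ≤ y →
      (1 - ε) * g ≤ (1 - ε * b) * g + ε * (a - b) * y := by
    intro a b g y ha hb hba hg hy
    have h1 : 0 ≤ ε * (a - b) := mul_nonneg hε0.le (by linarith)
    have h2 := mul_le_mul_of_nonneg_left hy h1
    have h3 : 0 ≤ ε * g := by positivity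
    have h4 : 0 ≤ ε * g * (2 - a - b) := mul_nonneg h3 (by linarith [ha.2, hb.2])
    nlinarith
  have hg := he.2.2 i hi
  rcases Nat.eq_zero_or_pos i with rfl | hi0
  · rw [h0, hU 1 le_rfl hn, he.1]
    rw [he.1] at hg
    have hL := hΛr (Nat.dist 1 w)
    have : 0 ≤ ε * (1 - Λ (Nat.dist 1 w)) * e 1 :=
      mul_nonneg (mul_nonneg hε0.le (by linarith [hL.2])) (by simpa using hg.le)
    have : 0 ≤ ε * Λ (Nat.dist 1 w) * x := mul_nonneg (mul_nonneg hε0.le hL.1) hx.1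
    simp only [zero_add]
    nlinarith
  rcases Nat.lt_or_ge i n with hin | hin
  · rw [hU i hi0 hi, hU (i+1) (by omega) (by omega)]
    rcases Nat.lt_or_ge i w with hiw | hiw
    · have hmono := he.mono (i := i+1) (j := w) hiw (by omega)
      have hx := mid_le (he.lt hiw (by omega)) (hwin i hi0 hi)
      have hd : Λ (Nat.dist i w) ≤ Λ (Nat.dist (i+1) w) := hΛanti (by
        rw [Nat.dist_eq_sub_of_le hiw, Nat.dist_eq_sub_of_le hiw.le]; omega)
      have := key _ _ (e (i+1) - e i) (x - e (i+1)) (hΛr (Nat.dist (i+1) w)) (hΛr (Nat.dist i w))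
        hd (by linarith) (by linarith)
      nlinarith
    · have hmono := he.mono (i := w) (j := i) hiw (by omega)
      have hx := le_mid (he.lt (i := w) (j := i+1) (by omega) (by omega))
        (hwin (i+1) (by omega) (by omega))
      have hd : Λ (Nat.dist (i+1) w) ≤ Λ (Nat.dist i w) := hΛanti (by
        rw [Nat.dist_eq_sub_of_le_right hiw, Nat.dist_eq_sub_of_le_right (by omega)]; omega)
      have := key _ _ (e (i+1) - e i) (e i - x) (hΛr (Nat.dist i w)) (hΛr (Nat.dist (i+1) w))
        hd (by linarith) (by linarith)
      nlinarith
  · obtain rfl : i = n := le_antisymm hi hin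
    rw [h1, hU i hi0 le_rfl, he.2.1]
    rw [he.2.1] at hg
    have hL := hΛr (Nat.dist i w)
    have : 0 ≤ ε * (1 - Λ (Nat.dist i w)) * (1 - e i) :=
      mul_nonneg (mul_nonneg hε0.le (by linarith [hL.2])) (by linarith)
    have : 0 ≤ ε * Λ (Nat.dist i w) * (1 - x) := mul_nonneg (mul_nonneg hε0.le hL.1) (by linarith [hx.2])
    nlinarith

/-- opening a gap -/
theorem open_step {Λ : ℕ → ℝ} (hΛr : ∀ k, Λ k ∈ Set.Icc (0 : ℝ) 1) (hΛ0 : Λ 0 = 1) {ε : ℝ}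
    (hε : ε ∈ Ioo (0:ℝ) 1) {n : ℕ} {k₀ : ℕ} (hk : 2 * k₀ + 1 < n) (hkΛ : Λ (k₀ + 1) < Λ k₀)
    {e : ℕ → ℝ} (he : Good n e) {δ : ℝ} (hδ : 0 < δ) (hO : ∃ i ≤ n, δ ≤ e (i+1) - e i)
    (hC : ∃ i ≤ n, e (i+1) - e i < δ) :
    ∃ w i a, 1 ≤ w ∧ w ≤ n ∧ i ≤ n ∧ e (i+1) - e i < δ ∧ 0 ≤ a ∧ a + δ/4 ≤ 1 ∧
      ∀ x ∈ Ioo a (a + δ/4), (∀ j, 1 ≤ j → j ≤ n → j ≠ w → |x - e w| < |x - e j|) ∧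
        ∀ e', Upd Λ ε n e e' w x → ε * (Λ k₀ - Λ (k₀+1)) / 4 * δ ≤ e' (i+1) - e' i := by
  obtain ⟨hε0, hε1⟩ := hε
  -- winning intervals
  have winU : ∀ w, 1 ≤ w → w ≤ n → δ ≤ e (w+1) - e w → ∀ x ∈ Ioo (e w + δ/4) (e w + δ/4 + δ/4),
      ∀ j, 1 ≤ j → j ≤ n → j ≠ w → |x - e w| < |x - e j| := by
    intro w h1 h2 h3 x hx j hj1 hj2 hjw
    rw [abs_of_pos (by linarith [hx.1] : 0 < x - e w)]
    rcases Nat.lt_or_gt_of_ne hjw with h | h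
    · have := he.lt h (by omega)
      rw [abs_of_pos (by linarith [hx.1])]
      linarith
    · have := he.mono (i := w+1) (j := j) (by omega) (by omega)
      rw [abs_of_neg (by linarith [hx.2])]
      linarith [hx.2]
  have winL : ∀ w, 1 ≤ w → w ≤ n → δ ≤ e w - e (w-1) → ∀ x ∈ Ioo (e w - δ/2) (e w - δ/2 + δ/4),
      ∀ j, 1 ≤ j → j ≤ n → j ≠ w → |x - e w| < |x - e j| := by
    intro w h1 h2 h3 x hx j hj1 hj2 hjw
    rw [abs_of_neg (by linarith [hx.2] : x - e w < 0)]
    rcases Nat.lt_or_gt_of_ne hjw with h | h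
    · have := he.mono (i := j) (j := w-1) (by omega) (by omega)
      rw [abs_of_pos (by linarith [hx.1])]
      linarith [hx.1]
    · have := he.lt h (by omega)
      rw [abs_of_neg (by linarith [hx.2])]
      linarith [hx.2]
  have e0 : ∀ i ≤ n+1, 0 ≤ e i := fun i hi => he.1 ▸ he.mono (Nat.zero_le i) hi
  have e1 : ∀ i ≤ n+1, e i ≤ 1 := fun i hi => he.2.1 ▸ he.mono hi le_rfl
  set a := Λ k₀ with ha
  set b := Λ (k₀+1) with hb
  have hb1 : b ≤ 1 := (hΛr _).2
  have hb0 : 0 ≤ b := (hΛr _).1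
  have ha1 : a ≤ 1 := (hΛr _).2
  have hexp : ∀ g y : ℝ, 0 < g → δ/4 ≤ y →
      ε * (a - b) / 4 * δ ≤ (1 - ε * b) * g + ε * (a - b) * y := by
    intro g y hg hy
    have h1 : 0 ≤ ε * (a - b) := mul_nonneg hε0.le (by linarith)
    have h2 := mul_le_mul_of_nonneg_left hy h1
    have h3 : 0 ≤ (1 - ε * b) * g := mul_nonneg (by nlinarith) hg.le
    nlinarith
  by_cases hmid : ∃ i, 1 ≤ i ∧ i < n ∧ ¬ (δ ≤ e (i+1) - e i)
  · obtain ⟨w, i, hw1, hwn, hOw, hi1, hin, hic, hrel⟩ :=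
      comb_open n k₀ hk (fun i => δ ≤ e (i+1) - e i) hO hmid
    have hg := he.2.2 i hin.le
    have hcase1 : ∀ x e', Upd Λ ε n e e' w x → i = w + k₀ → δ/4 ≤ e i - x →
        ε * (a - b) / 4 * δ ≤ e' (i+1) - e' i := by
      intro x e' hU hiw hy
      rw [hU.2.2 i hi1 hin.le, hU.2.2 (i+1) (by omega) (by omega)]
      rw [show Nat.dist i w = k₀ by rw [Nat.dist_eq_sub_of_le_right (by omega)]; omega,
        show Nat.dist (i+1) w = k₀+1 by rw [Nat.dist_eq_sub_of_le_right (by omega)]; omega,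
        ← ha, ← hb]
      have := hexp (e (i+1) - e i) _ (by linarith) hy
      linarith
    have hcase2 : ∀ x e', Upd Λ ε n e e' w x → i + 1 + k₀ = w → δ/4 ≤ x - e (i+1) →
        ε * (a - b) / 4 * δ ≤ e' (i+1) - e' i := by
      intro x e' hU hiw hy
      rw [hU.2.2 i hi1 hin.le, hU.2.2 (i+1) (by omega) (by omega)]
      rw [show Nat.dist i w = k₀+1 by rw [Nat.dist_eq_sub_of_le (by omega)]; omega,
        show Nat.dist (i+1) w = k₀ by rw [Nat.dist_eq_sub_of_le (by omega)]; omega,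
        ← ha, ← hb]
      have := hexp (e (i+1) - e i) _ (by linarith) hy
      linarith
    simp only [not_le] at hic
    rcases hOw with hOw | hOw
    · refine ⟨w, i, e w + δ/4, hw1, hwn, hin.le, hic, by linarith [e0 w (by omega)],
        by linarith [e1 (w+1) (by omega)], fun x hx => ⟨winU w hw1 hwn hOw x hx, ?_⟩⟩
      intro e' hU
      rcases hrel with hrel | hrel
      · refine hcase1 x e' hU hrel ?_
        have hk0 : k₀ ≠ 0 := by
          rintro rfl
          simp only [add_zero] at hrel
          subst hrel
          linarith
        have := he.mono (i := w+1) (j := i) (by omega) (by omega)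
        linarith [hx.2]
      · refine hcase2 x e' hU hrel ?_
        have := he.mono (i := i+1) (j := w) (by omega) (by omega)
        linarith [hx.1]
    · rw [show w - 1 + 1 = w by omega] at hOw
      refine ⟨w, i, e w - δ/2, hw1, hwn, hin.le, hic, by linarith [e0 (w-1) (by omega)],
        by linarith [e1 w (by omega)], fun x hx => ⟨winL w hw1 hwn hOw x hx, ?_⟩⟩
      intro e' hU
      rcases hrel with hrel | hrel
      · refine hcase1 x e' hU hrel ?_
        have := he.mono (i := w) (j := i) (by omega) (by omega)
        linarith [hx.2]
      · refine hcase2 x e' hU hrel ?_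
        have hk0 : k₀ ≠ 0 := by
          rintro rfl
          simp only [add_zero] at hrel
          subst hrel
          simp only [add_tsub_cancel_right] at hOw
          linarith
        have := he.mono (i := i+1) (j := w-1) (by omega) (by omega)
        linarith [hx.1]
  · have hall : ∀ i, 1 ≤ i → i < n → δ ≤ e (i+1) - e i := by
      intro i h1 h2
      by_contra h
      exact hmid ⟨i, h1, h2, h⟩
    have hab : ε * (a - b) / 4 * δ ≤ ε * (δ / 4) := by
      have : 0 ≤ ε * δ * (1 - (a - b)) := mul_nonneg (by positivity) (by linarith)
      nlinarith
    obtain ⟨i, hin, hic⟩ := hC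
    have hi : i = 0 ∨ i = n := by
      by_contra h
      have := hall i (by omega) (by omega)
      linarith
    rcases hi with rfl | rfl
    · have hg := hall 1 le_rfl (by omega)
      refine ⟨1, 0, e 1 + δ/4, le_rfl, by omega, by omega, hic, by linarith [e0 1 (by omega)],
        by linarith [e1 2 (by omega)], fun x hx => ⟨winU 1 le_rfl (by omega) hg x hx, ?_⟩⟩
      intro e' hU
      rw [zero_add, hU.1, hU.2.2 1 le_rfl (by omega), Nat.dist_self, hΛ0]
      have := e0 1 (by omega)
      have : ε * (δ/4) ≤ ε * (x - e 1) := mul_le_mul_of_nonneg_left (by linarith [hx.1]) hε0.le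
      nlinarith
    · have hg := hall (i-1) (by omega) (by omega)
      rw [show i - 1 + 1 = i by omega] at hg
      refine ⟨i, i, e i - δ/2, by omega, le_rfl, le_rfl, hic, by linarith [e0 (i-1) (by omega)],
        by linarith [e1 i (by omega)], fun x hx => ⟨winL i (by omega) le_rfl hg x hx, ?_⟩⟩
      intro e' hU
      rw [hU.2.1, hU.2.2 i (by omega) le_rfl, Nat.dist_self, hΛ0]
      have := e1 i (by omega)
      have : ε * (δ/4) ≤ ε * (e i - x) := mul_le_mul_of_nonneg_left (by linarith [hx.2]) hε0.le
      nlinarith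

theorem winner_spec {n : ℕ} [NeZero n] (m : Fin n → ℝ) (x : ℝ) (j : Fin n) :
    |x - m (winner m x)| ≤ |x - m j| := by
  have h := Finset.min'_mem (Finset.univ.filter fun i : Fin n => ∀ j, |x - m i| ≤ |x - m j|) (by
      obtain ⟨i, -, hi⟩ := Finset.exists_min_image (Finset.univ : Finset (Fin n))
        (fun i => |x - m i|) ⟨0, Finset.mem_univ _⟩
      exact ⟨i, Finset.mem_filter.mpr ⟨Finset.mem_univ _,
        fun j => hi j (Finset.mem_univ _)⟩⟩)
  exact (Finset.mem_filter.mp h).2 j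

theorem winner_min {n : ℕ} [NeZero n] (m : Fin n → ℝ) (x : ℝ) (i : Fin n)
    (hi : ∀ j, |x - m i| ≤ |x - m j|) : winner m x ≤ i :=
  Finset.min'_le _ _ (Finset.mem_filter.mpr ⟨Finset.mem_univ _, hi⟩)

theorem winner_eq_of_lt {n : ℕ} [NeZero n] (m : Fin n → ℝ) (x : ℝ) (w : Fin n)
    (h : ∀ j, j ≠ w → |x - m w| < |x - m j|) : winner m x = w := by
  by_contra hne
  exact absurd (winner_spec m x w) (not_le.mpr (h _ hne))

theorem winner_eq_iff {n : ℕ} [NeZero n] (m : Fin n → ℝ) (x : ℝ) (w : Fin n) :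
    winner m x = w ↔ (∀ j, |x - m w| ≤ |x - m j|) ∧ ∀ i < w, ¬ ∀ j, |x - m i| ≤ |x - m j| := by
  constructor
  · rintro rfl
    exact ⟨winner_spec m x, fun i hi h => absurd (winner_min m x i h) (not_le.mpr hi)⟩
  · rintro ⟨h1, h2⟩
    refine le_antisymm (winner_min m x w h1) ?_
    by_contra h
    exact h2 _ (not_le.mp h) (winner_spec m x)

theorem measurable_winner {n : ℕ} [NeZero n] :
    Measurable (fun q : (Fin n → ℝ) × ℝ => winner q.1 q.2) := by
  apply measurable_to_countable'
  intro w
  have : (fun q : (Fin n → ℝ) × ℝ => winner q.1 q.2) ⁻¹' {w} =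
      {q | (∀ j, |q.2 - q.1 w| ≤ |q.2 - q.1 j|) ∧
        ∀ i < w, ¬ ∀ j, |q.2 - q.1 i| ≤ |q.2 - q.1 j|} := by
    ext q
    simp only [mem_preimage, mem_singleton_iff, winner_eq_iff, mem_ofPred_eq]
  rw [this]
  have hb : ∀ i, MeasurableSet {q : (Fin n → ℝ) × ℝ | ∀ j, |q.2 - q.1 i| ≤ |q.2 - q.1 j|} := by
    intro i
    rw [ofPred_forall]
    refine MeasurableSet.iInter fun j => measurableSet_le ?_ ?_ <;>
    · apply Measurable.abs; fun_prop
  have hc : MeasurableSet {q : (Fin n → ℝ) × ℝ | ∀ i < w, ¬ ∀ j, |q.2 - q.1 i| ≤ |q.2 - q.1 j|} := by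
    have : {q : (Fin n → ℝ) × ℝ | ∀ i < w, ¬ ∀ j, |q.2 - q.1 i| ≤ |q.2 - q.1 j|} =
        ⋂ i, ⋂ (_ : i < w), {q : (Fin n → ℝ) × ℝ | ∀ j, |q.2 - q.1 i| ≤ |q.2 - q.1 j|}ᶜ := by
      ext q
      simp
    rw [this]
    exact MeasurableSet.iInter fun i => MeasurableSet.iInter fun _ => (hb i).compl
  exact (hb w).inter hc

theorem measurable_som {n : ℕ} [NeZero n] (Λ : ℕ → ℝ) (ε : ℝ) :
    Measurable (fun q : (Fin n → ℝ) × ℝ => somUpdate Λ ε q.1 q.2) := by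
  rw [measurable_pi_iff]
  intro i
  unfold somUpdate
  have h : Measurable (fun q : (Fin n → ℝ) × ℝ => Λ (Nat.dist i.1 (winner q.1 q.2).1)) :=
    (Measurable.of_discrete (f := fun w : Fin n => Λ (Nat.dist i.1 w.1))).comp measurable_winner
  have h2 : Measurable (fun q : (Fin n → ℝ) × ℝ => q.1 i) := by fun_prop
  exact h2.sub ((measurable_const.mul h).mul (h2.sub measurable_snd))

/-- extended state -/
def extS {n : ℕ} (m : Fin n → ℝ) (k : ℕ) : ℝ :=
  if k = 0 then 0 else if h : k - 1 < n then m ⟨k-1, h⟩ else 1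

theorem extS_zero {n : ℕ} (m : Fin n → ℝ) : extS m 0 = 0 := by simp [extS]
theorem extS_last {n : ℕ} (m : Fin n → ℝ) : extS m (n+1) = 1 := by simp [extS]
theorem extS_succ {n : ℕ} (m : Fin n → ℝ) (i : Fin n) : extS m (i.1+1) = m i := by
  simp [extS]

theorem extS_of {n : ℕ} (m : Fin n → ℝ) (k : ℕ) (h1 : 1 ≤ k) (h2 : k ≤ n) :
    extS m k = m ⟨k-1, by omega⟩ := by
  simp only [extS]
  rw [if_neg (by omega), dif_pos (by omega)]

theorem continuous_extS {n : ℕ} (k : ℕ) : Continuous (fun m : Fin n → ℝ => extS m k) := by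
  unfold extS
  split_ifs <;> fun_prop

theorem extS_upd {n : ℕ} [NeZero n] (Λ : ℕ → ℝ) (ε : ℝ) (m : Fin n → ℝ) (x : ℝ) :
    Upd Λ ε n (extS m) (extS (somUpdate Λ ε m x)) ((winner m x).1+1) x := by
  refine ⟨extS_zero _, extS_last _, fun k h1 h2 => ?_⟩
  rw [extS_of _ k h1 h2, extS_of _ k h1 h2]
  simp only [somUpdate]
  obtain ⟨k, rfl⟩ := Nat.exists_eq_add_of_le' h1
  rw [Nat.dist_add_add_right]
  rfl

theorem good_of_mem {n : ℕ} {m : Fin n → ℝ} (hn : 1 ≤ n) (h : m ∈ Fplus n) : Good n (extS m) := by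
  refine ⟨extS_zero _, extS_last _, fun i hi => ?_⟩
  rcases Nat.eq_zero_or_pos i with rfl | h0
  · rw [extS_zero, extS_of _ _ le_rfl hn]
    exact (h.2 _).1
  rcases Nat.lt_or_ge i n with h1 | h1
  · rw [extS_of _ i h0 hi, extS_of _ (i+1) (by omega) (by omega)]
    apply h.1
    rw [Fin.lt_def]
    simp only
    omega
  · obtain rfl : i = n := le_antisymm hi h1
    rw [extS_last, extS_of _ i h0 hi]
    exact (h.2 _).2

theorem mem_of_good {n : ℕ} {m : Fin n → ℝ} (h : Good n (extS m)) : m ∈ Fplus n := by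
  refine ⟨fun i j hij => ?_, fun i => ⟨?_, ?_⟩⟩
  · rw [← extS_succ m i, ← extS_succ m j]
    exact h.lt (by simpa using hij) (by omega)
  · rw [← extS_succ m i, ← h.1]
    exact h.lt (by omega) (by omega)
  · rw [← extS_succ m i, ← h.2.1]
    exact h.lt (by omega) (by omega)

theorem som_gap {n : ℕ} [NeZero n] (hn : 1 ≤ n) {Λ : ℕ → ℝ} (hΛanti : Antitone Λ)
    (hΛr : ∀ k, Λ k ∈ Set.Icc (0 : ℝ) 1) {ε : ℝ} (hε : ε ∈ Ioo (0:ℝ) 1) {m : Fin n → ℝ}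
    (hm : m ∈ Fplus n) {x : ℝ} (hx : x ∈ Icc (0:ℝ) 1) (i : ℕ) (hi : i ≤ n) :
    (1 - ε) * (extS m (i+1) - extS m i) ≤
      extS (somUpdate Λ ε m x) (i+1) - extS (somUpdate Λ ε m x) i := by
  refine gap_dec hΛanti hΛr hε hx hn (good_of_mem hn hm) (by omega)
    (by have := (winner m x).2; omega) ?_ (extS_upd Λ ε m x) i hi
  intro j h1 h2
  rw [extS_succ, extS_of _ j h1 h2]
  exact winner_spec m x _

theorem som_mem {n : ℕ} [NeZero n] (hn : 1 ≤ n) {Λ : ℕ → ℝ} (hΛanti : Antitone Λ)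
    (hΛr : ∀ k, Λ k ∈ Set.Icc (0 : ℝ) 1) {ε : ℝ} (hε : ε ∈ Ioo (0:ℝ) 1) {m : Fin n → ℝ}
    (hm : m ∈ Fplus n) {x : ℝ} (hx : x ∈ Icc (0:ℝ) 1) : somUpdate Λ ε m x ∈ Fplus n := by
  refine mem_of_good ⟨extS_zero _, extS_last _, fun i hi => ?_⟩
  have h1 := som_gap hn hΛanti hΛr hε hm hx i hi
  have h2 := (good_of_mem hn hm).2.2 i hi
  have h3 : 0 < (1 - ε) * (extS m (i+1) - extS m i) :=
    mul_pos (by linarith [hε.2]) (by linarith)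
  linarith

theorem continuousAt_som {n : ℕ} [NeZero n] (Λ : ℕ → ℝ) (ε : ℝ) {m : Fin n → ℝ}
    (hm : m ∈ Fplus n) {x : ℝ} (hx : ∀ i j, i ≠ j → x ≠ (m i + m j) / 2) :
    ContinuousAt (fun m' => somUpdate Λ ε m' x) m := by
  have hstrict : ∀ j, j ≠ winner m x → |x - m (winner m x)| < |x - m j| := by
    intro j hj
    refine lt_of_le_of_ne (winner_spec m x j) fun h => ?_
    rcases abs_eq_abs.mp h with h | h
    · exact hj (hm.1.injective (by linarith))
    · exact hx _ _ hj (by linarith)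
  have hev : ∀ᶠ m' in 𝓝 m, winner m' x = winner m x := by
    have : ∀ᶠ m' : Fin n → ℝ in 𝓝 m, ∀ j, j ≠ winner m x → |x - m' (winner m x)| < |x - m' j| := by
      rw [eventually_all]
      intro j
      by_cases hj : j = winner m x
      · exact Eventually.of_forall fun _ h => absurd hj h
      · have h1 : ContinuousAt (fun m' : Fin n → ℝ => |x - m' (winner m x)|) m :=
          Continuous.continuousAt (by fun_prop)
        have h2 : ContinuousAt (fun m' : Fin n → ℝ => |x - m' j|) m :=
          Continuous.continuousAt (by fun_prop)
        filter_upwards [h1.eventually_lt h2 (hstrict j hj)] with m' h _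
        exact h
    filter_upwards [this] with m' h
    exact winner_eq_of_lt m' x _ h
  have hc : ContinuousAt (fun m' : Fin n → ℝ => fun i : Fin n =>
      m' i - ε * Λ (Nat.dist i.1 (winner m x).1) * (m' i - x)) m :=
    Continuous.continuousAt (by fun_prop)
  refine hc.congr ?_
  filter_upwards [hev] with m' h
  funext i
  change _ = m' i - ε * Λ (Nat.dist i.1 (winner m' x).1) * (m' i - x)
  rw [h]

theorem mu_pos (μ : Measure ℝ) (f : ℝ → ℝ)
    (hdens : μ = volume.withDensity fun x => ENNReal.ofReal (f x)) (hHμ : Hmu f)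
    {u v : ℝ} (hu : 0 ≤ u) (huv : u < v) (hv : v ≤ 1) : 0 < μ (Ioo u v) := by
  have hconc : ConcaveOn ℝ (Set.Ioo (0 : ℝ) 1) (fun x => Real.log (f x)) := by
    rcases hHμ.2 with h | h
    · exact h.concaveOn
    · exact h.1
  set u' := (2 * u + v) / 3 with hu'
  set v' := (u + 2 * v) / 3 with hv'
  have huI : u' ∈ Ioo (0:ℝ) 1 := ⟨by linarith, by linarith⟩
  have hvI : v' ∈ Ioo (0:ℝ) 1 := ⟨by linarith, by linarith⟩
  have hlow : ∀ y ∈ Icc u' v', min (f u') (f v') ≤ f y := by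
    intro y hy
    have hyI : y ∈ Ioo (0:ℝ) 1 := ⟨huI.1.trans_le hy.1, hy.2.trans_lt hvI.2⟩
    have h := hconc.min_le_of_mem_Icc huI hvI hy
    rcases min_le_iff.mp h with h | h
    · exact min_le_of_left_le ((Real.log_le_log_iff (hHμ.1 _ huI) (hHμ.1 _ hyI)).mp h)
    · exact min_le_of_right_le ((Real.log_le_log_iff (hHμ.1 _ hvI) (hHμ.1 _ hyI)).mp h)
  have hc : 0 < min (f u') (f v') := lt_min (hHμ.1 _ huI) (hHμ.1 _ hvI)
  have h1 : Icc u' v' ⊆ Ioo u v := fun y hy => ⟨by linarith [hy.1], by linarith [hy.2]⟩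
  refine lt_of_lt_of_le ?_ (measure_mono h1)
  rw [hdens, withDensity_apply _ measurableSet_Icc]
  calc 0 < ENNReal.ofReal (min (f u') (f v')) * volume (Icc u' v') := by
        rw [Real.volume_Icc]
        exact ENNReal.mul_pos (ENNReal.ofReal_pos.mpr hc).ne'
          (ENNReal.ofReal_pos.mpr (by linarith)).ne'
    _ = ∫⁻ y in Icc u' v', ENNReal.ofReal (min (f u') (f v')) := by simp
    _ ≤ _ := setLIntegral_mono' measurableSet_Icc
      (fun y hy => ENNReal.ofReal_le_ofReal (hlow y hy))

theorem mu_unif (μ : Measure ℝ) (hpos : ∀ u v : ℝ, 0 ≤ u → u < v → v ≤ 1 → 0 < μ (Ioo u v))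
    {l : ℝ} (hl : 0 < l) :
    ∃ p : ℝ≥0∞, 0 < p ∧ ∀ a, 0 ≤ a → a + l ≤ 1 → p ≤ μ (Ioo a (a + l)) := by
  obtain ⟨N, hN⟩ := exists_nat_gt (2 / l)
  have hN0 : (0:ℝ) < N := lt_trans (by positivity) hN
  have hNl : 2 < l * N := by rwa [div_lt_iff₀' hl] at hN
  have hNn : 0 < N := by exact_mod_cast hN0
  have hne : (Finset.range N).Nonempty := ⟨0, by simpa using hNn⟩
  refine ⟨(Finset.range N).inf' hne
    (fun j : ℕ => μ (Ioo ((j:ℝ)/N) (((j:ℝ)+1)/N))), ?_, ?_⟩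
  · refine (Finset.lt_inf'_iff _).mpr ?_
    intro j hj
    have hj : j + 1 ≤ N := by simpa using hj
    have hj' : (j:ℝ) + 1 ≤ N := by exact_mod_cast hj
    refine hpos _ _ (by positivity) (by gcongr; linarith) ?_
    rwa [div_le_one hN0]
  · intro a ha hal
    have h1 := Nat.le_ceil (a * N)
    have h2 := Nat.ceil_lt_add_one (show 0 ≤ a * N by positivity)
    have h3 : (⌈a * N⌉₊ : ℝ) + 1 < (a + l) * N := by nlinarith
    have h4 : ⌈a * N⌉₊ < N := by
      have : (⌈a * N⌉₊ : ℝ) < N := by nlinarith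
      exact_mod_cast this
    refine (Finset.inf'_le _ (Finset.mem_range.mpr h4)).trans (measure_mono ?_)
    refine Ioo_subset_Ioo ?_ ?_
    · rw [le_div_iff₀ hN0]; exact h1
    · rw [div_le_iff₀ hN0]; exact h3.le

theorem som_invariant_measure_exists {n : ℕ} [NeZero n] (hn : 2 ≤ n)
    (Λ : ℕ → ℝ) (hΛanti : Antitone Λ) (hΛ0 : Λ 0 = 1)
    (hΛrange : ∀ k, Λ k ∈ Set.Icc (0 : ℝ) 1) (hHΛ : HLambda n Λ)
    (μ : Measure ℝ) [IsProbabilityMeasure μ] (f : ℝ → ℝ)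
    (hdens : μ = volume.withDensity fun x => ENNReal.ofReal (f x))
    (hsupp : ∀ x, x ∉ Set.Icc (0 : ℝ) 1 → f x = 0)
    (hHμ : Hmu f)
    (ε : ℝ) (hε : ε ∈ Set.Ioo (0 : ℝ) 1) :
    ∃ ν : Measure (Fin n → ℝ), IsProbabilityMeasure ν ∧
      IsSOMInvariant μ Λ ε ν ∧ ν (Fplus n) = 1 := by
  have hn1 : 1 ≤ n := by omega
  obtain ⟨k₀, hk, hkΛ⟩ := hHΛ
  -- basic facts on `μ`
  have hac : μ ≪ volume := hdens ▸ withDensity_absolutelyContinuous _ _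
  have hIcc : ∀ᵐ x ∂μ, x ∈ Icc (0:ℝ) 1 := by
    rw [ae_iff]
    change μ (Icc (0:ℝ) 1)ᶜ = 0
    rw [hdens, withDensity_apply _ measurableSet_Icc.compl]
    rw [setLIntegral_congr_fun (g := fun _ => 0) measurableSet_Icc.compl
      (fun x hx => by simp [hsupp x hx])]
    simp
  -- the clamped dynamics
  let cl : ℝ → ℝ := fun x => max 0 (min 1 x)
  have hcl : ∀ x, cl x ∈ Icc (0:ℝ) 1 := fun x =>
    ⟨le_max_left _ _, max_le zero_le_one (min_le_left _ _)⟩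
  have hcleq : ∀ x ∈ Icc (0:ℝ) 1, cl x = x := fun x hx => by
    simp only [cl]; rw [min_eq_right hx.2, max_eq_right hx.1]
  have hclm : Measurable cl := by
    apply Continuous.measurable; fun_prop
  let τ : Fplus n → ℝ → Fplus n := fun m x =>
    ⟨somUpdate Λ ε m.1 (cl x), som_mem hn1 hΛanti hΛrange hε m.2 (hcl x)⟩
  have hτm : Measurable (fun q : Fplus n × ℝ => τ q.1 q.2) := by
    refine Measurable.subtype_mk ?_
    exact (measurable_som Λ ε).comp
      ((measurable_subtype_coe.comp measurable_fst).prodMk (hclm.comp measurable_snd))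
  have hτm1 : ∀ m, Measurable (τ m) := fun m => hτm.comp measurable_prodMk_left
  have hκmeas : Measurable (fun m : Fplus n => μ.map (τ m)) := by
    refine Measure.measurable_of_measurable_coe _ fun s hs => ?_
    have : (fun m : Fplus n => μ.map (τ m) s) =
        fun m => μ (Prod.mk m ⁻¹' ((fun q : Fplus n × ℝ => τ q.1 q.2) ⁻¹' s)) := by
      funext m
      rw [Measure.map_apply (hτm1 m) hs]
      rfl
    rw [this]
    exact measurable_measure_prodMk_left (hτm hs)
  let κ : ProbabilityTheory.Kernel (Fplus n) (Fplus n) := ⟨fun m => μ.map (τ m), hκmeas⟩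
  have hκ : ∀ m, κ m = μ.map (τ m) := fun m => rfl
  have hMarkov : ProbabilityTheory.IsMarkovKernel κ :=
    ⟨fun m => Measure.isProbabilityMeasure_map (hτm1 m).aemeasurable⟩
  -- Feller property
  have hF : ∀ g : BoundedContinuousFunction (Fplus n) ℝ,
      Continuous fun m => ∫ y, g y ∂κ m := by
    intro g
    have : (fun m => ∫ y, g y ∂κ m) = fun m => ∫ x, g (τ m x) ∂μ := by
      funext m
      rw [hκ, integral_map (hτm1 m).aemeasurable g.continuous.measurable.aestronglyMeasurable]
    rw [this, continuous_iff_continuousAt]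
    intro m₀
    refine continuousAt_of_dominated (bound := fun _ => ‖g‖) ?_ ?_ (integrable_const _) ?_
    · exact Eventually.of_forall fun m =>
        (g.continuous.measurable.comp (hτm1 m)).aestronglyMeasurable
    · exact Eventually.of_forall fun m => Eventually.of_forall fun x => g.norm_coe_le_norm _
    · have hfin : ∀ᵐ x ∂μ, ∀ i j, x ≠ (m₀.1 i + m₀.1 j) / 2 := by
        rw [ae_all_iff]; intro i
        rw [ae_all_iff]; intro j
        exact hac.ae_le (Measure.ae_ne volume _)
      filter_upwards [hIcc, hfin] with x hx hx2
      refine g.continuous.continuousAt.comp ?_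
      rw [Topology.IsInducing.subtypeVal.continuousAt_iff]
      have h := continuousAt_som Λ ε m₀.2 (x := cl x) (by
        intro i j _; rw [hcleq x hx]; exact hx2 i j)
      exact ContinuousAt.comp (f := fun m : Fplus n => m.1) h continuous_subtype_val.continuousAt
  -- gaps
  let G : ℕ → Fplus n → ℝ := fun i m => extS m.1 (i+1) - extS m.1 i
  have hGc : ∀ i, Continuous (G i) := fun i =>
    ((continuous_extS (i+1)).comp continuous_subtype_val).sub
      ((continuous_extS i).comp continuous_subtype_val)
  have hGpos : ∀ i ≤ n, ∀ m, 0 < G i m := fun i hi m =>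
    sub_pos.mpr ((good_of_mem hn1 m.2).2.2 i hi)
  have hGdec : ∀ i ≤ n, ∀ m x, (1 - ε) * G i m ≤ G i (τ m x) := fun i hi m x =>
    som_gap hn1 hΛanti hΛrange hε m.2 (hcl x) i hi
  have hne : (Finset.range (n+1)).Nonempty := ⟨0, by simp⟩
  let D : Fplus n → ℝ := fun m => (Finset.range (n+1)).inf' hne (fun i => G i m)
  have hDle : ∀ m a, a ≤ D m ↔ ∀ i ≤ n, a ≤ G i m := by
    intro m a
    simp only [D, Finset.le_inf'_iff, Finset.mem_range, Nat.lt_succ_iff]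
  have hDc : Continuous D := Continuous.finset_inf'_apply hne (fun i _ => hGc i)
  have hDpos : ∀ m, 0 < D m := by
    intro m
    refine (Finset.lt_inf'_iff _).mpr fun i hi => hGpos i ?_ m
    simpa [Nat.lt_succ_iff] using hi
  have hr0 : 0 < 1 - ε := by linarith [hε.2]
  have hr1 : 1 - ε ≤ 1 := by linarith [hε.1]
  have hdec : ∀ m, ∀ᵐ y ∂(κ m), (1 - ε) * D m ≤ D y := by
    intro m
    rw [hκ, ae_map_iff (hτm1 m).aemeasurable
      (measurableSet_le measurable_const hDc.measurable)]
    refine Eventually.of_forall fun x => ?_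
    rw [hDle]
    intro i hi
    exact (mul_le_mul_of_nonneg_left ((hDle m _).mp le_rfl i hi) hr0.le).trans (hGdec i hi m x)
  -- constants
  set c : ℝ := min (1 - ε) (ε * (Λ k₀ - Λ (k₀+1)) / 4) with hcdef
  have hc0 : 0 < c := lt_min hr0 (by
    have := mul_pos hε.1 (sub_pos.mpr hkΛ); linarith)
  have hc1 : c ≤ 1 := (min_le_left _ _).trans hr1
  let δ : ℕ → ℝ := fun j => c ^ j * ((n:ℝ) + 1)⁻¹
  have hδ0 : ∀ j, 0 < δ j := fun j => by positivity
  have hδs : ∀ j, δ (j+1) = c * δ j := fun j => by simp only [δ]; ring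
  have hδle : ∀ j ≤ n, δ n ≤ δ j := fun j hj => by
    simp only [δ]
    exact mul_le_mul_of_nonneg_right (pow_le_pow_of_le_one hc0.le hc1 hj) (by positivity)
  have hδle0 : ∀ j, δ j ≤ ((n:ℝ) + 1)⁻¹ := fun j => by
    simp only [δ]
    exact mul_le_of_le_one_left (by positivity) (pow_le_one₀ hc0.le hc1)
  have hexopen : ∀ m : Fplus n, ∃ i ≤ n, ((n:ℝ)+1)⁻¹ ≤ G i m := by
    intro m
    by_contra h
    push Not at h
    have hsum : ∑ i ∈ Finset.range (n+1), G i m = 1 := by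
      simp only [G]
      rw [Finset.sum_range_sub (fun i => extS m.1 i), extS_last, extS_zero, sub_zero]
    have : ∑ i ∈ Finset.range (n+1), G i m < ∑ i ∈ Finset.range (n+1), ((n:ℝ)+1)⁻¹ :=
      Finset.sum_lt_sum_of_nonempty hne fun i hi =>
        h i (by simpa [Nat.lt_succ_iff] using hi)
    rw [hsum] at this
    simp only [Finset.sum_const, Finset.card_range, nsmul_eq_mul] at this
    push_cast at this
    rw [mul_inv_cancel₀ (by positivity)] at this
    exact lt_irrefl _ this
  -- open gaps
  let S : ℕ → Fplus n → Finset ℕ := fun j m =>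
    (Finset.range (n+1)).filter (fun i => δ j ≤ G i m)
  let W : ℕ → Set (Fplus n) := fun j => {m | j + 1 ≤ (S j m).card}
  have hWm : ∀ j, MeasurableSet (W j) := by
    intro j
    have hmeas : Measurable (fun m => (S j m).card) := by
      simp only [S, Finset.card_filter]
      refine Finset.measurable_sum _ fun i _ => ?_
      exact Measurable.ite (measurableSet_le measurable_const (hGc i).measurable)
        measurable_const measurable_const
    exact measurableSet_le measurable_const hmeas
  have hW0 : W 0 = univ := by
    refine eq_univ_of_forall fun m => ?_
    obtain ⟨i, hi, h⟩ := hexopen m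
    have : i ∈ S 0 m := Finset.mem_filter.mpr
      ⟨Finset.mem_range.mpr (by omega), (hδle0 0).trans h⟩
    exact Finset.card_pos.mpr ⟨i, this⟩
  obtain ⟨p, hp0, hp⟩ := mu_unif μ
    (fun u v hu huv hv => mu_pos μ f hdens hHμ hu huv hv) (l := δ n / 4)
    (by have := hδ0 n; positivity)
  have hSmono : ∀ j m x, S j m ⊆ S (j+1) (τ m x) := by
    intro j m x i hi
    obtain ⟨h1, h2⟩ := Finset.mem_filter.mp hi
    refine Finset.mem_filter.mpr ⟨h1, ?_⟩
    have h3 := hGdec i (by simpa [Nat.lt_succ_iff] using h1) m x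
    rw [hδs]
    calc c * δ j ≤ (1 - ε) * δ j := mul_le_mul_of_nonneg_right (min_le_left _ _) (hδ0 j).le
      _ ≤ (1 - ε) * G i m := mul_le_mul_of_nonneg_left h2 hr0.le
      _ ≤ _ := h3
  have hp1 : p ≤ 1 := by
    have h : δ n / 4 ≤ 1 := by
      have h1 := hδle0 n
      have h2 : ((n:ℝ)+1)⁻¹ ≤ 1 := inv_le_one_of_one_le₀ (by linarith [(Nat.cast_nonneg n : (0:ℝ) ≤ n)])
      linarith
    exact (hp 0 le_rfl (by linarith)).trans prob_le_one
  have hstep : ∀ j < n, ∀ m ∈ W j, p ≤ κ m (W (j+1)) := by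
    intro j hj m hm
    rw [hκ, Measure.map_apply (hτm1 m) (hWm _)]
    by_cases hall : ∃ i ≤ n, G i m < δ j
    · obtain ⟨i₁, hi₁, h₁⟩ := hexopen m
      obtain ⟨w, i, a, hw1, hwn, hi, hic, ha0, ha1, H⟩ := open_step (k₀ := k₀) hΛrange hΛ0 hε hk hkΛ
        (good_of_mem hn1 m.2) (hδ0 j) ⟨i₁, hi₁, (hδle0 j).trans h₁⟩ hall
      have hle := hδle j hj.le
      refine (hp a ha0 (by linarith)).trans (measure_mono ?_)
      intro x hx
      have hx' : x ∈ Ioo a (a + δ j / 4) := ⟨hx.1, hx.2.trans_le (by linarith)⟩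
      have hx01 : x ∈ Icc (0:ℝ) 1 := ⟨by linarith [hx'.1], by linarith [hx'.2]⟩
      obtain ⟨hwin, hopen⟩ := H x hx'
      have hwin' : winner m.1 x = ⟨w-1, by omega⟩ := by
        apply winner_eq_of_lt
        intro k hkw
        have := hwin (k.1+1) (by omega) (by omega) (by
          intro h; apply hkw; ext; simp only; omega)
        rwa [extS_succ, extS_of _ w hw1 hwn] at this
      have hU := extS_upd Λ ε m.1 x
      rw [hwin'] at hU
      simp only [Nat.sub_add_cancel hw1] at hU
      have hnew := hopen _ hU
      have hnew' : δ (j+1) ≤ G i (τ m x) := by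
        simp only [G, τ]
        rw [hcleq x hx01, hδs]
        exact (mul_le_mul_of_nonneg_right (min_le_right _ _) (hδ0 j).le).trans hnew
      have hss : S j m ⊂ S (j+1) (τ m x) := by
        refine Finset.ssubset_iff_of_subset (hSmono j m x) |>.mpr ⟨i, ?_, ?_⟩
        · exact Finset.mem_filter.mpr ⟨Finset.mem_range.mpr (by omega), hnew'⟩
        · intro h
          exact absurd (Finset.mem_filter.mp h).2 (not_le.mpr hic)
      have := Finset.card_lt_card hss
      have hm' : j + 1 ≤ (S j m).card := hm
      change j + 1 + 1 ≤ (S (j+1) (τ m x)).card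
      omega
    · push Not at hall
      have : τ m ⁻¹' W (j+1) = univ := by
        refine eq_univ_of_forall fun x => ?_
        have h1 : S j m = Finset.range (n+1) := Finset.filter_true_of_mem fun i hi =>
          hall i (by simpa [Nat.lt_succ_iff] using hi)
        have h2 := Finset.card_le_card (hSmono j m x)
        rw [h1, Finset.card_range] at h2
        change j + 1 + 1 ≤ (S (j+1) (τ m x)).card
        omega
      rw [this, measure_univ]
      exact hp1
  have hWT : ∀ m ∈ W n, δ n ≤ D m := by
    intro m hm
    have hm' : n + 1 ≤ (S n m).card := hm
    have : S n m = Finset.range (n+1) :=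
      Finset.eq_of_subset_of_card_le (Finset.filter_subset _ _) (by simpa using hm')
    rw [hDle]
    intro i hi
    have h : i ∈ S n m := by rw [this]; exact Finset.mem_range.mpr (by omega)
    exact (Finset.mem_filter.mp h).2
  -- initial state
  let x₀ : Fplus n := ⟨fun i => ((i:ℕ) + 1 : ℝ) / (n + 1), by
    constructor
    · intro i j hij
      have : ((i:ℕ):ℝ) < (j:ℕ) := by exact_mod_cast hij
      simp only
      gcongr
    · intro i
      have : ((i:ℕ):ℝ) < n := by exact_mod_cast i.2
      refine ⟨by positivity, ?_⟩
      rw [div_lt_one (by positivity)]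
      linarith⟩
  have hcompact : ∀ η > 0, IsCompact {m : Fplus n | η ≤ D m} := by
    intro η hη
    rw [Subtype.isCompact_iff]
    have : (Subtype.val '' {m : Fplus n | η ≤ D m}) =
        (⋂ i ∈ Finset.range (n+1), {m : Fin n → ℝ | η ≤ extS m (i+1) - extS m i}) ∩
          Set.pi univ (fun _ => Icc (0:ℝ) 1) := by
      ext m
      simp only [mem_image, mem_ofPred_eq, mem_inter_iff, mem_iInter, Finset.mem_range,
        Nat.lt_succ_iff]
      constructor
      · rintro ⟨m, hm, rfl⟩
        exact ⟨(hDle m η).mp hm, fun i _ => ⟨(m.2.2 i).1.le, (m.2.2 i).2.le⟩⟩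
      · rintro ⟨hm, -⟩
        have hmem : m ∈ Fplus n := mem_of_good ⟨extS_zero _, extS_last _, fun i hi => by
          linarith [hm i hi]⟩
        exact ⟨⟨m, hmem⟩, (hDle _ η).mpr hm, rfl⟩
    rw [this]
    refine (isCompact_univ_pi fun _ => isCompact_Icc).inter_left ?_
    exact isClosed_biInter fun i _ => isClosed_le continuous_const
      ((continuous_extS (i+1)).sub (continuous_extS i))
  obtain ⟨π, hπp, hπ⟩ := krylov_bogoliubov κ hF (fun k => kpow κ k x₀) (fun k => inferInstance)
    (fun k => by rw [kpow, ProbabilityTheory.Kernel.comp_apply]) (by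
      intro e he
      obtain ⟨η, hη, h⟩ := tight_of_return κ D hDc.measurable hDpos (1 - ε) hr0 hr1 hdec n W hWm
        hW0 p hp0 hstep (δ n) (hδ0 n) hWT x₀ e he
      refine ⟨{m | η ≤ D m}, hcompact η hη, fun k => ?_⟩
      refine (measure_mono ?_).trans (h k)
      intro m hm
      simpa using hm)
  -- push forward
  have hsm1 : ∀ m : Fin n → ℝ, Measurable (fun x => somUpdate Λ ε m x) := fun m =>
    (measurable_som Λ ε).comp measurable_prodMk_left
  have hbm : Measurable (fun m : Fin n → ℝ => μ.map fun x => somUpdate Λ ε m x) := by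
    refine Measure.measurable_of_measurable_coe _ fun s hs => ?_
    have : (fun m : Fin n → ℝ => μ.map (fun x => somUpdate Λ ε m x) s) =
        fun m => μ (Prod.mk m ⁻¹' ((fun q : (Fin n → ℝ) × ℝ => somUpdate Λ ε q.1 q.2) ⁻¹' s)) := by
      funext m
      rw [Measure.map_apply (hsm1 m) hs]
      rfl
    rw [this]
    exact measurable_measure_prodMk_left (measurable_som Λ ε hs)
  have hval : Measurable (Subtype.val : Fplus n → Fin n → ℝ) := measurable_subtype_coe
  refine ⟨π.map Subtype.val, Measure.isProbabilityMeasure_map hval.aemeasurable, ?_, ?_⟩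
  · unfold IsSOMInvariant
    ext s hs
    have hbs : Measurable (fun m : Fin n → ℝ => μ.map (fun x => somUpdate Λ ε m x) s) :=
      (Measure.measurable_coe hs).comp hbm
    rw [Measure.bind_apply hs hbm.aemeasurable, lintegral_map hbs hval,
      Measure.map_apply hval hs]
    conv_rhs => rw [← hπ]
    rw [Measure.bind_apply (hval hs) κ.aemeasurable]
    refine lintegral_congr fun m => ?_
    rw [hκ, Measure.map_apply (hsm1 _) hs, Measure.map_apply (hτm1 m) (hval hs)]
    apply measure_congr
    filter_upwards [hIcc] with x hx
    apply propext
    change somUpdate Λ ε m.1 x ∈ s ↔ somUpdate Λ ε m.1 (cl x) ∈ s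
    rw [hcleq x hx]
  · have h : ∀ᵐ m ∂(π.map Subtype.val), m ∈ Fplus n := by
      refine (ae_map_iff hval.aemeasurable ?_).mpr (Eventually.of_forall fun m => m.2)
      have : {m : Fin n → ℝ | m ∈ Fplus n} =
          ⋂ i ∈ Finset.range (n+1), {m : Fin n → ℝ | extS m i < extS m (i+1)} := by
        ext m
        simp only [mem_ofPred_eq, mem_iInter, Finset.mem_range, Nat.lt_succ_iff]
        exact ⟨fun h => (good_of_mem hn1 h).2.2,
          fun h => mem_of_good ⟨extS_zero _, extS_last _, h⟩⟩
      rw [this]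
      exact Finset.measurableSet_biInter _ fun i _ =>
        measurableSet_lt (continuous_extS i).measurable (continuous_extS (i+1)).measurable
    have := Measure.isProbabilityMeasure_map (μ := π) hval.aemeasurable
    have h' : (Fplus n : Set (Fin n → ℝ)) =ᵐ[π.map Subtype.val] univ := eventuallyEq_univ.mpr h
    rw [measure_congr h', measure_univ]

end
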